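/- Let G be a single-decision causal influence diagram with decision D and let X be a variable of G other than D. If there exist a parent W of D and a utility node U such that (1) G contains a directed path from X to W, (2) G contains a directed path from D to U, and (3) W is not d-separated from U by ({D} ∪ Pa_D) \ {W}, then there exists a SCIM compatible with G that has a response incentive on X. -/

import Mathlib

attribute [local instance] Classical.propDecidable

noncomputable section

/-! ### d-separation in a directed graph -/

/-- `b` is a collider on a path segment `a - b - c`. -/
def IsCollider {V : Type} (E : V → V → Prop) (a b c : V) : Prop := E a b ∧ E c b

/-- The triple `a - b - c` on an undirected path blocks the path w.r.t. `Z`: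
either the middle node is a non-collider (chain or fork) belonging to `Z`, or it is a
collider such that neither it nor any of its descendants belongs to `Z`. -/
def BlockedTriple {V : Type} (E : V → V → Prop) (Z : Set V) (a b c : V) : Prop :=
  (¬ IsCollider E a b c ∧ b ∈ Z) ∨
    (IsCollider E a b c ∧ ∀ w, Relation.ReflTransGen E b w → w ∉ Z)

/-- An undirected path: a nonempty list of distinct vertices in which consecutive
vertices are joined by an edge in one direction or the other. -/
def IsUPath {V : Type} (E : V → V → Prop) (p : List V) : Prop :=
  p ≠ [] ∧ p.Nodup ∧ p.Chain' (fun a b => E a b ∨ E b a)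

/-- A path is d-separated (blocked) by `Z` if some consecutive triple blocks it. -/
def BlockedPath {V : Type} (E : V → V → Prop) (Z : Set V) (p : List V) : Prop :=
  ∃ l₁ a b c l₂, p = l₁ ++ a :: b :: c :: l₂ ∧ BlockedTriple E Z a b c

/-- `Z` d-separates the node sets `S` and `T`: every undirected path from a node of `S`
to a node of `T` is blocked by `Z`. -/
def DSep {V : Type} (E : V → V → Prop) (S T Z : Set V) : Prop :=
  ∀ p : List V, IsUPath E p → (∃ s ∈ S, p.head? = some s) →
    (∃ t ∈ T, p.getLast? = some t) → BlockedPath E Z p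

/-! ### Causal influence diagrams and structural causal influence models -/

/-- A single-decision causal influence diagram: a finite DAG whose vertices are
partitioned into structure nodes, one decision node and utility nodes
(the utility nodes having no children). -/
structure CID (V : Type) where
  edge : V → V → Prop
  acyclic : ∀ v, ¬ Relation.TransGen edge v v
  decision : V
  utility : Finset V
  decision_not_utility : decision ∉ utility
  utility_no_children : ∀ u ∈ utility, ∀ v, ¬ edge u v

/-- A (single-decision) structural causal influence model over a CID: finite nonempty
domains for every variable, one finite-domain exogenous variable per variable, structural
functions for every non-decision variable, real-valued (injectively embedded, i.e. the
domain is a subset of ℝ) utility variables, and mutually independent exogenous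
distributions. -/
structure SCIM (V : Type) extends CID V where
  dom : V → Type
  dom_fintype : ∀ v, Fintype (dom v)
  dom_nonempty : ∀ v, Nonempty (dom v)
  edom : V → Type
  edom_fintype : ∀ v, Fintype (edom v)
  edom_nonempty : ∀ v, Nonempty (edom v)
  utilVal : ∀ v, dom v → ℝ
  utilVal_inj : ∀ v ∈ utility, Function.Injective (utilVal v)
  f : ∀ v, v ≠ decision → (∀ w, edge w v → dom w) → edom v → dom v
  μ : ∀ v, edom v → ℝ
  μ_nonneg : ∀ v e, 0 ≤ μ v e
  μ_sum : ∀ v, ∑ e ∈ @Finset.univ (edom v) (edom_fintype v), μ v e = 1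

variable {V : Type} [Fintype V] [DecidableEq V]

instance (M : SCIM V) (v : V) : Fintype (M.dom v) := M.dom_fintype v
instance (M : SCIM V) (v : V) : Nonempty (M.dom v) := M.dom_nonempty v
instance (M : SCIM V) (v : V) : Fintype (M.edom v) := M.edom_fintype v
instance (M : SCIM V) (v : V) : Nonempty (M.edom v) := M.edom_nonempty v

namespace SCIM

variable (M : SCIM V)

/-- A joint setting of the exogenous variables. -/
abbrev Env := ∀ v, M.edom v

/-- Joint probability of an exogenous setting (the exogenous variables are independent). -/
def prob (ε : M.Env) : ℝ := ∏ v, M.μ v (ε v)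

/-- The type of structural mechanisms for the vertex `v`. -/
def Mechanism (v : V) : Type := (∀ w, M.edge w v → M.dom w) → M.edom v → M.dom v

/-- A policy: a structural function for the decision node. -/
abbrev Policy := M.Mechanism M.decision

theorem edge_wf : WellFounded M.edge := by
  haveI : IsTrans V (Relation.TransGen M.edge) := ⟨fun _ _ _ h h' => h.trans h'⟩
  haveI : IsIrrefl V (Relation.TransGen M.edge) := ⟨M.acyclic⟩
  exact Subrelation.wf (fun h => Relation.TransGen.single h)
    (Finite.wellFounded_of_trans_of_irrefl _)

/-- The unique solution of the structural equations `mech` given exogenous setting `ε`. -/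
def solve (mech : ∀ v, M.Mechanism v) (ε : M.Env) : ∀ v, M.dom v :=
  WellFounded.fix (C := fun v => M.dom v) M.edge_wf
    (fun v IH => mech v (fun w hw => IH w hw) (ε v))

/-- The mechanisms of the SCM `M_π` obtained by fixing the policy `π`. -/
def polMech (π : M.Policy) : ∀ v, M.Mechanism v :=
  fun v => if h : v = M.decision then cast (congrArg M.Mechanism h).symm π else M.f v h

/-- Apply an intervention (a partial assignment `ι` of values) to mechanisms:
intervened variables are set to constants. -/
def doMech (mech : ∀ v, M.Mechanism v) (ι : ∀ v, Option (M.dom v)) : ∀ v, M.Mechanism v :=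
  fun v => match ι v with
    | some x => fun _ _ => x
    | none => mech v

/-- The single intervention `do(X = x)` as a partial assignment. -/
def single (X : V) (x : M.dom X) : ∀ v, Option (M.dom v) :=
  fun v => if h : v = X then some (cast (congrArg M.dom h).symm x) else none

/-- The value `W(ε)` of each variable in `M_π`. -/
def val (π : M.Policy) (ε : M.Env) : ∀ v, M.dom v := M.solve (M.polMech π) ε

/-- The potential response: the value of each variable in the submodel of `M_π`
given by the intervention `ι`. -/
def valDo (π : M.Policy) (ι : ∀ v, Option (M.dom v)) (ε : M.Env) : ∀ v, M.dom v :=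
  M.solve (M.doMech (M.polMech π) ι) ε

/-- Total utility of an assignment of values to the variables. -/
def totUtil (a : ∀ v, M.dom v) : ℝ := ∑ v ∈ M.utility, M.utilVal v (a v)

/-- Expected total utility of the policy `π`. -/
def EU (π : M.Policy) : ℝ := ∑ ε : M.Env, M.prob ε * M.totUtil (M.val π ε)

/-- An optimal policy maximizes expected total utility. -/
def Optimal (π : M.Policy) : Prop := ∀ π' : M.Policy, M.EU π' ≤ M.EU π

/-- A decision context: a joint value of the parents of the decision. -/
abbrev Ctx := ∀ w, M.edge w M.decision → M.dom w

/-- The decision context realized by the exogenous setting `ε` in `M_π`. -/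
def ctx (π : M.Policy) (ε : M.Env) : M.Ctx := fun w _ => M.val π ε w

/-- Probability of a decision context in `M_π`. -/
def ctxProb (π : M.Policy) (pa : M.Ctx) : ℝ :=
  ∑ ε : M.Env, if M.ctx π ε = pa then M.prob ε else 0

/-- Conditional expectation of `g` given the decision context `pa` in `M_π`. -/
def condExp (π : M.Policy) (pa : M.Ctx) (g : M.Env → ℝ) : ℝ :=
  (∑ ε : M.Env, if M.ctx π ε = pa then M.prob ε * g ε else 0) / M.ctxProb π pa

/-- The nested potential response `𝒰_{X_d}(ε)`: total utility when `X` is set to the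
value it would take under `do(D = d)`, everything else following `M_π`. -/
def nestedU (π : M.Policy) (X : V) (d : M.dom M.decision) (ε : M.Env) : ℝ :=
  M.totUtil (M.valDo π (M.single X (M.valDo π (M.single M.decision d) ε X)) ε)

/-- Control incentive on `X`: under every optimal policy, in some positive-probability
decision context some alternative decision `d` changes expected utility through `X`. -/
def ControlIncentive (X : V) : Prop :=
  ∀ π : M.Policy, M.Optimal π →
    ∃ pa : M.Ctx, 0 < M.ctxProb π pa ∧ ∃ d : M.dom M.decision,
      M.condExp π pa (M.nestedU π X d) ≠
        M.condExp π pa (fun ε => M.totUtil (M.val π ε))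

/-- Response incentive on `X`: under every optimal policy some intervention on `X`
changes the decision for some exogenous setting. -/
def ResponseIncentive (X : V) : Prop :=
  ∀ π : M.Policy, M.Optimal π →
    ∃ (x : M.dom X) (ε : M.Env),
      M.valDo π (M.single X x) ε M.decision ≠ M.val π ε M.decision

/-- Conditional probability of `event` given `cond` in `M_π`. -/
def cprob (π : M.Policy) (event cond : M.Env → Prop) : ℝ :=
  (∑ ε : M.Env, if cond ε ∧ event ε then M.prob ε else 0) /
    (∑ ε : M.Env, if cond ε then M.prob ε else 0)

/-- Counterfactual fairness of a policy `π` with respect to a protected attribute `A`: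
conditional on any positive-probability decision context and value of `A`, intervening
on `A` does not change the distribution of the decision. -/
def CFair (π : M.Policy) (A : V) : Prop :=
  ∀ (d : M.dom M.decision) (pa : M.Ctx) (a a' : M.dom A),
    (0 < ∑ ε : M.Env, if M.ctx π ε = pa ∧ M.val π ε A = a then M.prob ε else 0) →
      M.cprob π (fun ε => M.valDo π (M.single A a') ε M.decision = d)
          (fun ε => M.ctx π ε = pa ∧ M.val π ε A = a) =
        M.cprob π (fun ε => M.val π ε M.decision = d)
          (fun ε => M.ctx π ε = pa ∧ M.val π ε A = a)

/-- Expected value of the sum of utility variables in `S`. -/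
def EUOn (S : Finset V) (π : M.Policy) : ℝ :=
  ∑ ε : M.Env, M.prob ε * ∑ v ∈ S, M.utilVal v (M.val π ε v)

/-- The policy obtained from `π` by replacing the observations of the decision-parents
that are descendants of `X` by the fixed values `p`. -/
def modPolicy (π : M.Policy) (X : V) (p : M.Ctx) : M.Policy :=
  fun pa e =>
    π (fun w hw => if Relation.ReflTransGen M.edge X w then p w hw else pa w hw) e

end SCIM

/-- The graphical criterion for control incentives: a directed path `D ⇝ X ⇝ U`
for some utility node `U`. -/
def CICriterion {V : Type} (G : CID V) (X : V) : Prop :=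
  Relation.ReflTransGen G.edge G.decision X ∧
    ∃ u ∈ G.utility, Relation.ReflTransGen G.edge X u

/-- The graphical criterion for response incentives: a directed path from `X` to some
parent `W` of the decision `D`, a directed path from `D` to some utility node `U`, and
`W` d-connected to `U` given `({D} ∪ Pa_D) \ {W}`. -/
def RICriterion {V : Type} (G : CID V) (X : V) : Prop :=
  ∃ W, G.edge W G.decision ∧ ∃ u ∈ G.utility,
    Relation.ReflTransGen G.edge X W ∧
    Relation.ReflTransGen G.edge G.decision u ∧
    ¬ DSep G.edge {W} {u} (({G.decision} ∪ {w | G.edge w G.decision}) \ {W})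

end

/-!
Every node tosses a fair coin and passes on the set of coin assignments, or worlds, that it deems
possible. A node observed by the decision withholds its own coin and reveals what its parents know
only up to complement, and complementing a world flips all coins at once, so the decision is told
only whether coins agree. The exception is `W`, which withholds nothing as soon as it receives a
signal sent by `X`.

When the signal flows, follow an active path from `W` to a utility node. Against the edges, the
decision keeps knowing all that the current node knows. Along the edges, it already knows the coin
of the last fork, and the node on the path is told that coin too. At a collider, the decision is
told up to complement what the collider is told; since it knows one of the coins involved, it can
discard the wrong complement. At the end of the path, the utility node and the decision both know
the coin of some node `T ≠ D`, and if guessing it is what is rewarded, then every optimal policy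
always guesses it correctly. But if `X` is muted, flipping all coins except that of the decision
leaves its observations unchanged, although the coin of `T` flips, so the optimal decision must
respond to `X`.
-/

theorem exists_embedding_real_lt {α : Type*} [Countable α] {a b : α} (hab : a ≠ b) :
    ∃ g : α ↪ ℝ, g a < g b := by
  obtain ⟨f, hf⟩ := Countable.exists_injective_nat α
  have hcast : Function.Injective fun x => (f x : ℝ) := Nat.cast_injective.comp hf
  rcases lt_or_gt_of_ne (hcast.ne hab) with h | h
  · exact ⟨⟨_, hcast⟩, h⟩
  · exact ⟨⟨_, neg_injective.comp hcast⟩, neg_lt_neg h⟩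

/-- What is left of the knowledge "the world lies in `K`" once a world can no longer be told
apart from its complement. -/
def upToCompl {α : Type*} [Compl α] (K : Set α) : Set α := {σ | σ ∈ K ∨ σᶜ ∈ K}

theorem upToCompl_mono {α : Type*} [Compl α] {K L : Set α} (h : K ⊆ L) :
    upToCompl K ⊆ upToCompl L :=
  fun _ => Or.imp (@h _) (@h _)

theorem upToCompl_idem {α : Type*} [BooleanAlgebra α] (K : Set α) :
    upToCompl (upToCompl K) = upToCompl K := by
  ext σ
  simp only [upToCompl, Set.mem_ofPred_eq, compl_compl]
  tauto

theorem subset_upToCompl {α : Type*} [Compl α] (K : Set α) : K ⊆ upToCompl K :=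
  fun _ => Or.inl

section BlockedPath

variable {V : Type} {E : V → V → Prop} {Z : Set V} {a b c : V} {l : List V}

theorem BlockedTriple.blockedPath (h : BlockedTriple E Z a b c) :
    BlockedPath E Z (a :: b :: c :: l) :=
  ⟨[], a, b, c, l, rfl, h⟩

theorem BlockedPath.cons (h : BlockedPath E Z l) (a : V) : BlockedPath E Z (a :: l) := by
  obtain ⟨l₁, x, y, z, l₂, rfl, hxyz⟩ := h
  exact ⟨a :: l₁, x, y, z, l₂, rfl, hxyz⟩

end BlockedPath

namespace CID

variable {V : Type} {G : CID V} {v w : V}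

theorem wellFounded_edge [Finite V] (G : CID V) : WellFounded G.edge := by
  have : IsTrans V (Relation.TransGen G.edge) := ⟨fun _ _ _ h h' => h.trans h'⟩
  have : Std.Irrefl (Relation.TransGen G.edge) := ⟨G.acyclic⟩
  exact Subrelation.wf Relation.TransGen.single
    (Finite.wellFounded_of_trans_of_irrefl (Relation.TransGen G.edge))

theorem not_edge_symm (h : G.edge v w) : ¬ G.edge w v :=
  fun h' => G.acyclic v (.head h (.single h'))

theorem notMem_utility_of_edge (h : G.edge v w) : v ∉ G.utility :=
  fun hv => G.utility_no_children v hv w h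

theorem ne_of_mem_utility (hv : v ∈ G.utility) : v ≠ G.decision :=
  ne_of_mem_of_not_mem hv G.decision_not_utility

theorem ne_of_transGen (h : Relation.TransGen G.edge v w) : v ≠ w := by
  rintro rfl
  exact G.acyclic v h

theorem notMem_utility_of_transGen (h : Relation.TransGen G.edge v w) : v ∉ G.utility := by
  obtain ⟨_, hv, _⟩ := Relation.TransGen.head'_iff.1 h
  exact notMem_utility_of_edge hv

/-- The conditioning set `({D} ∪ Pa_D) \ {W}` of the response incentive criterion. -/
def condSet (G : CID V) (W : V) : Set V := ({G.decision} ∪ {w | G.edge w G.decision}) \ {W}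

variable {W : V}

theorem ne_decision_of_notMem_condSet (hW : W ≠ G.decision) (hv : v ∉ G.condSet W) :
    v ≠ G.decision := by
  rintro rfl
  exact hv ⟨Or.inl rfl, hW.symm⟩

theorem eq_of_edge_of_notMem_condSet (hv : v ∉ G.condSet W) (h : G.edge v G.decision) : v = W :=
  by_contra fun hne => hv ⟨Or.inr h, hne⟩

theorem transGen_of_reflTransGen_condSet (hv : v ≠ G.decision) (hw : w ∈ G.condSet W)
    (h : Relation.ReflTransGen G.edge v w) : Relation.TransGen G.edge v G.decision := by
  rcases hw.1 with rfl | hwD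
  · exact (Relation.reflTransGen_iff_eq_or_transGen.1 h).resolve_left hv.symm
  · exact .tail' h hwD

end CID

/-- The value of a node: a `signal` that originates in `X`, an `action` that originates in the
decision, and the set of assignments of coin tosses to nodes that the node deems possible. -/
@[ext]
structure Message (V : Type) where
  signal : Prop
  action : Prop
  worlds : Set (V → Bool)

namespace Message

variable {V : Type}

instance [Finite V] : Finite (Message V) :=
  Finite.of_injective (fun m : Message V => (m.signal, m.action, m.worlds)) fun m m' h => by
    simp only [Prod.mk.injEq] at h
    exact Message.ext h.1 h.2.1 h.2.2

/-- The message that conveys only the truth value of `p`; it encodes both the actions of the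
decision and the outcomes of the utility nodes. -/
def ofAction (p : Prop) : Message V := ⟨False, p, Set.univ⟩

theorem ofAction_injective : Function.Injective (ofAction : Prop → Message V) :=
  fun _ _ h => congrArg action h

end Message

namespace CID

variable {V : Type} {G : CID V}

/-- The messages that a node receives from its parents. -/
abbrev Inbox (G : CID V) (v : V) : Type := ∀ w, G.edge w v → Message V

/-- The messages that `v` receives when the nodes take the values `m`. -/
def inbox (G : CID V) (m : V → Message V) (v : V) : G.Inbox v := fun w _ => m w

namespace Inbox

variable {v : V} (I : G.Inbox v)

/-- Some parent passes on the signal of `X`. -/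
def signal : Prop := ∃ w h, (I w h).signal

/-- Some parent passes on the action of the decision. -/
def action : Prop := ∃ w h, (I w h).action

/-- The worlds that all parents deem possible. The decision is ignored, since a policy may
output any message, sound or not. -/
def worlds : Set (V → Bool) := {σ | ∀ w h, w ≠ G.decision → σ ∈ (I w h).worlds}

/-- The parents jointly know that the coin of `a` shows `true`. -/
def Entails (a : V) : Prop := ∀ σ ∈ I.worlds, σ a = true

end Inbox

/-- The message of a structure node `v` whose coin shows `e`: it pools the knowledge of its
parents and, unless it is observed by the decision, adds its own coin. An observed node reveals
the pooled knowledge only up to complement; the exception is `W`, which hides nothing once it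
receives the signal of `X`. -/
def relay (X W v : V) (I : G.Inbox v) (e : Bool) : Message V where
  signal := v = X ∨ I.signal
  action := I.action
  worlds := if G.edge v G.decision ∧ ¬ (v = W ∧ (v = X ∨ I.signal)) then upToCompl I.worlds
    else {σ ∈ I.worlds | σ v = e}

/-- The assignment `m` satisfies the structural equations of all structure nodes when the coins
show `ε`. -/
def Solves (G : CID V) (X W : V) (ε : V → Bool) (m : V → Message V) : Prop :=
  ∀ v, v ≠ G.decision → v ∉ G.utility → m v = relay X W v (G.inbox m v) (ε v)

/-- The analogue of `CID.Solves` for the submodel in which `X` is muted. -/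
def SolvesMuted (G : CID V) (X W : V) (ε : V → Bool) (m : V → Message V) : Prop :=
  m X = .ofAction False ∧
    ∀ v, v ≠ X → v ≠ G.decision → v ∉ G.utility → m v = relay X W v (G.inbox m v) (ε v)

/-- The messages that `v` receives always determine the coin of `a`. -/
def Reveals (G : CID V) (X W v a : V) : Prop :=
  ∀ ⦃ε : V → Bool⦄ ⦃m : V → Message V⦄, G.Solves X W ε m →
    ∀ σ ∈ (G.inbox m v).worlds, σ a = ε a

/-- The invariant of a walk along an active path that has just stepped from `a` to `b`. After a
step against an edge, the decision knows all that `b` knows; after a step along an edge, there is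
a coin that both the decision and `b` are told. -/
def Travel (G : CID V) (X W a b : V) : Prop :=
  (G.edge b a ∧ Relation.TransGen G.edge b G.decision ∧
    ∀ ⦃ε m⦄, G.Solves X W ε m → (G.inbox m G.decision).worlds ⊆ (m b).worlds) ∨
  (G.edge a b ∧ ∃ s ≠ G.decision, G.Reveals X W b s ∧ G.Reveals X W G.decision s)

variable {X W a b c u v w : V} {ε ε' : V → Bool} {m m' : V → Message V}

theorem inbox_worlds_subset (h : G.edge w v) (hw : w ≠ G.decision) :
    (G.inbox m v).worlds ⊆ (m w).worlds :=
  fun _ hσ => hσ w h hw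

theorem relay_worlds_subset (I : G.Inbox v) (e : Bool) :
    (relay X W v I e).worlds ⊆ upToCompl I.worlds := by
  unfold relay
  dsimp only
  split_ifs
  · exact subset_rfl
  · exact (Set.sep_subset _ _).trans (subset_upToCompl _)

namespace Solves

theorem mem_inbox_worlds [Finite V] (hm : G.Solves X W ε m) (v : V) :
    ε ∈ (G.inbox m v).worlds := by
  induction v using G.wellFounded_edge.induction with
  | h v ih =>
    intro w hw hwD
    change ε ∈ (m w).worlds
    rw [hm w hwD (notMem_utility_of_edge hw), relay]
    dsimp only
    split_ifs
    · exact Or.inl (ih w hw)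
    · exact ⟨ih w hw, rfl⟩

theorem signal (hm : G.Solves X W ε m) (hXv : Relation.ReflTransGen G.edge X v)
    (hv : Relation.TransGen G.edge v G.decision) : (m v).signal := by
  induction hXv with
  | refl =>
    rw [hm _ (ne_of_transGen hv) (notMem_utility_of_transGen hv)]
    exact Or.inl rfl
  | @tail b c _ hbc ih =>
    rw [hm _ (ne_of_transGen hv) (notMem_utility_of_transGen hv)]
    exact Or.inr ⟨b, hbc, ih (hv.head hbc)⟩

theorem worlds_eq_of_notMem_condSet (hm : G.Solves X W ε m) (hW : G.edge W G.decision)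
    (hXW : Relation.ReflTransGen G.edge X W) (hv : v ∉ G.condSet W) (hu : v ∉ G.utility) :
    (m v).worlds = {σ ∈ (G.inbox m v).worlds | σ v = ε v} := by
  have hvD := ne_decision_of_notMem_condSet (ne_of_transGen (.single hW)) hv
  have hsignal : v = W → v = X ∨ (G.inbox m v).signal := by
    rintro rfl
    have hs := hm.signal hXW (.single hW)
    rwa [hm v hvD hu] at hs
  rw [hm v hvD hu]
  refine if_neg fun h => h.2 ?_
  have hvW := eq_of_edge_of_notMem_condSet hv h.1
  exact ⟨hvW, hsignal hvW⟩

theorem worlds_subset_inbox_worlds (hm : G.Solves X W ε m) (hW : G.edge W G.decision)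
    (hXW : Relation.ReflTransGen G.edge X W) (hv : v ∉ G.condSet W) (hu : v ∉ G.utility) :
    (m v).worlds ⊆ (G.inbox m v).worlds := by
  rw [hm.worlds_eq_of_notMem_condSet hW hXW hv hu]
  exact Set.sep_subset _ _

theorem apply_eq_of_mem_worlds (hm : G.Solves X W ε m) (hW : G.edge W G.decision)
    (hXW : Relation.ReflTransGen G.edge X W) (hv : v ∉ G.condSet W) (hu : v ∉ G.utility)
    {σ : V → Bool} (hσ : σ ∈ (m v).worlds) : σ v = ε v := by
  rw [hm.worlds_eq_of_notMem_condSet hW hXW hv hu] at hσ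
  exact hσ.2

theorem decision_worlds_subset_upToCompl (hm : G.Solves X W ε m)
    (hv : Relation.TransGen G.edge v G.decision) :
    (G.inbox m G.decision).worlds ⊆ upToCompl (G.inbox m v).worlds := by
  have worlds_subset {w : V} (hw : Relation.TransGen G.edge w G.decision) :
      (m w).worlds ⊆ upToCompl (G.inbox m w).worlds := by
    rw [hm w (ne_of_transGen hw) (notMem_utility_of_transGen hw)]
    exact relay_worlds_subset _ _
  induction hv using Relation.TransGen.head_induction_on with
  | @single v hv =>
    have hv' := Relation.TransGen.single hv
    exact (inbox_worlds_subset hv (ne_of_transGen hv')).trans (worlds_subset hv')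
  | @head v w hvw hw ih =>
    have hv := hw.head hvw
    calc (G.inbox m G.decision).worlds
      _ ⊆ upToCompl (G.inbox m w).worlds := ih
      _ ⊆ upToCompl (m v).worlds := upToCompl_mono (inbox_worlds_subset hvw (ne_of_transGen hv))
      _ ⊆ upToCompl (upToCompl (G.inbox m v).worlds) := upToCompl_mono (worlds_subset hv)
      _ = upToCompl (G.inbox m v).worlds := upToCompl_idem _

theorem action_of_reflTransGen (hm : G.Solves X W ε m) (h : (m G.decision).action)
    (hv : Relation.ReflTransGen G.edge G.decision v) (hu : v ∉ G.utility) : (m v).action := by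
  induction hv with
  | refl => exact h
  | @tail x y hx hxy ih =>
    rw [hm y (ne_of_transGen (.tail' hx hxy)).symm hu]
    exact ⟨x, hxy, ih (notMem_utility_of_edge hxy)⟩

theorem decision_action [Finite V] (hm : G.Solves X W ε m) (hu : v ∉ G.utility)
    (h : (m v).action) : (m G.decision).action := by
  induction v using G.wellFounded_edge.induction with
  | h v ih =>
    by_cases hv : v = G.decision
    · exact hv ▸ h
    · rw [hm v hv hu] at h
      obtain ⟨w, hw, h⟩ := h
      exact ih w hw (notMem_utility_of_edge hw) h

theorem inbox_action_iff [Finite V] (hm : G.Solves X W ε m)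
    (hv : Relation.TransGen G.edge G.decision v) :
    (G.inbox m v).action ↔ (m G.decision).action := by
  constructor
  · rintro ⟨w, hw, h⟩
    exact hm.decision_action (notMem_utility_of_edge hw) h
  · intro h
    obtain ⟨w, hDw, hwv⟩ := Relation.TransGen.tail'_iff.1 hv
    exact ⟨w, hwv, hm.action_of_reflTransGen h hDw (notMem_utility_of_edge hwv)⟩

end Solves

theorem Reveals.entails_iff [Finite V] (h : G.Reveals X W v a) (hm : G.Solves X W ε m) :
    (G.inbox m v).Entails a ↔ ε a = true :=
  ⟨fun hI => hI ε (hm.mem_inbox_worlds v), fun ha σ hσ => (h hm σ hσ).trans ha⟩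

theorem reveals_of_edge (hW : G.edge W G.decision) (hXW : Relation.ReflTransGen G.edge X W)
    (hv : v ∉ G.condSet W) (hvw : G.edge v w) : G.Reveals X W w v := fun _ _ hm _ hσ =>
  hm.apply_eq_of_mem_worlds hW hXW hv (notMem_utility_of_edge hvw) (inbox_worlds_subset hvw
    (ne_decision_of_notMem_condSet (ne_of_transGen (.single hW)) hv) hσ)

theorem Reveals.of_edge (hW : G.edge W G.decision) (hXW : Relation.ReflTransGen G.edge X W)
    (h : G.Reveals X W v a) (hv : v ∉ G.condSet W) (hvw : G.edge v w) : G.Reveals X W w a :=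
  fun _ _ hm _ hσ => h hm _ (hm.worlds_subset_inbox_worlds hW hXW hv (notMem_utility_of_edge hvw)
    (inbox_worlds_subset hvw
      (ne_decision_of_notMem_condSet (ne_of_transGen (.single hW)) hv) hσ))

theorem Reveals.decision_worlds_subset (hb : G.Reveals X W b a)
    (hD : G.Reveals X W G.decision a) (hbD : Relation.TransGen G.edge b G.decision)
    (hm : G.Solves X W ε m) :
    (G.inbox m G.decision).worlds ⊆ (G.inbox m b).worlds := by
  intro σ hσ
  refine (hm.decision_worlds_subset_upToCompl hbD hσ).resolve_right fun hσc => ?_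
  have hflip : (!σ a) = σ a := (hb hm _ hσc).trans (hD hm σ hσ).symm
  exact Bool.not_ne_self _ hflip

namespace Travel

theorem step_backward (hW : G.edge W G.decision) (hXW : Relation.ReflTransGen G.edge X W)
    (hba : G.edge b a) (hbD : Relation.TransGen G.edge b G.decision)
    (hknow : ∀ ⦃ε m⦄, G.Solves X W ε m → (G.inbox m G.decision).worlds ⊆ (m b).worlds)
    (hb : b ∉ G.condSet W) (hbc : G.edge b c ∨ G.edge c b) : G.Travel X W b c := by
  have hbu := notMem_utility_of_edge hba
  rcases hbc with hbc | hcb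
  · exact Or.inr ⟨hbc, b, ne_of_transGen hbD, reveals_of_edge hW hXW hb hbc,
      fun ε m hm σ hσ => hm.apply_eq_of_mem_worlds hW hXW hb hbu (hknow hm hσ)⟩
  · have hcD := hbD.head hcb
    exact Or.inl ⟨hcb, hcD, fun ε m hm => (hknow hm).trans <|
      (hm.worlds_subset_inbox_worlds hW hXW hb hbu).trans
        (inbox_worlds_subset hcb (ne_of_transGen hcD))⟩

theorem step_collider {s : V} (hcb : G.edge c b) (hb : G.Reveals X W b s)
    (hD : G.Reveals X W G.decision s)
    (hbD : Relation.ReflTransGen G.edge b G.decision) : G.Travel X W b c := by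
  have hcD : Relation.TransGen G.edge c G.decision := .head' hcb hbD
  refine Or.inl ⟨hcb, hcD, fun ε m hm => ?_⟩
  refine subset_trans ?_ (inbox_worlds_subset hcb (ne_of_transGen hcD))
  rcases Relation.reflTransGen_iff_eq_or_transGen.1 hbD with hbD | hbD
  · rw [hbD]
  · exact hb.decision_worlds_subset hD hbD hm

theorem step (hW : G.edge W G.decision) (hXW : Relation.ReflTransGen G.edge X W)
    (h : G.Travel X W a b) (hbc : G.edge b c ∨ G.edge c b)
    (hactive : ¬ BlockedTriple G.edge (G.condSet W) a b c) : G.Travel X W b c := by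
  have notMem (hcol : ¬ IsCollider G.edge a b c) : b ∉ G.condSet W :=
    fun hb => hactive (Or.inl ⟨hcol, hb⟩)
  rcases h with ⟨hba, hbD, hknow⟩ | ⟨hab, s, hsD, hbs, hDs⟩
  · exact step_backward hW hXW hba hbD hknow (notMem fun hcol => not_edge_symm hba hcol.1) hbc
  rcases hbc with hbc | hcb
  · have hb := notMem fun hcol => not_edge_symm hbc hcol.2
    exact Or.inr ⟨hbc, s, hsD, hbs.of_edge hW hXW hb hbc, hDs⟩
  · refine step_collider hcb hbs hDs ?_
    by_cases hbD : b = G.decision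
    · rw [hbD]
    have : ∃ z, Relation.ReflTransGen G.edge b z ∧ z ∈ G.condSet W := by
      by_contra! hnone
      exact hactive (Or.inr ⟨⟨hab, hcb⟩, hnone⟩)
    obtain ⟨z, hbz, hz⟩ := this
    exact (transGen_of_reflTransGen_condSet hbD hz hbz).to_reflTransGen

theorem exists_reveals (hW : G.edge W G.decision) (hXW : Relation.ReflTransGen G.edge X W)
    (hu : u ∈ G.utility) {l : List V} (h : G.Travel X W a b)
    (hchain : (a :: b :: l).IsChain fun v w => G.edge v w ∨ G.edge w v)
    (hlast : (a :: b :: l).getLast? = some u)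
    (hactive : ¬ BlockedPath G.edge (G.condSet W) (a :: b :: l)) :
    ∃ s ≠ G.decision, G.Reveals X W u s ∧ G.Reveals X W G.decision s := by
  induction l generalizing a b with
  | nil =>
    obtain rfl : b = u := by simpa using hlast
    rcases h with ⟨hba, -⟩ | ⟨-, hs⟩
    · exact absurd hu (notMem_utility_of_edge hba)
    · exact hs
  | cons c l ih =>
    have hchain' := hchain.tail
    have hstep := h.step hW hXW (List.isChain_cons_cons.1 hchain').1
      (mt BlockedTriple.blockedPath hactive)
    exact ih hstep hchain' (by simpa using hlast) (mt (.cons · a) hactive)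

end Travel

theorem exists_reveals_of_not_dSep (hW : G.edge W G.decision)
    (hXW : Relation.ReflTransGen G.edge X W) (hu : u ∈ G.utility)
    (hsep : ¬ DSep G.edge {W} {u} (G.condSet W)) :
    ∃ s ≠ G.decision, G.Reveals X W u s ∧ G.Reveals X W G.decision s := by
  simp only [DSep, Set.mem_singleton_iff, exists_eq_left, not_forall] at hsep
  obtain ⟨p, ⟨-, -, hchain⟩, hhead, hlast, hactive⟩ := hsep
  have hWZ : W ∉ G.condSet W := fun h => h.2 rfl
  match p, hchain, hhead, hlast, hactive with
  | [w], _, hhead, hlast, _ =>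
    obtain rfl : w = W := by simpa using hhead
    obtain rfl : w = u := by simpa using hlast
    exact absurd hu (notMem_utility_of_edge hW)
  | w :: b :: l, hchain, hhead, hlast, hactive =>
    obtain rfl : w = W := by simpa using hhead
    refine Travel.exists_reveals hW hXW hu ?_ hchain hlast hactive
    exact Travel.step_backward hW hXW hW (.single hW)
      (fun _ _ _ => inbox_worlds_subset hW (ne_of_transGen (.single hW))) hWZ
      (List.isChain_cons_cons.1 hchain).1

namespace SolvesMuted

theorem not_signal [Finite V] (hm : G.SolvesMuted X W ε m)
    (hv : Relation.TransGen G.edge v G.decision) : ¬ (m v).signal := by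
  induction v using G.wellFounded_edge.induction with
  | h v ih =>
    by_cases hvX : v = X
    · rw [hvX, hm.1]
      exact id
    · rw [hm.2 v hvX (ne_of_transGen hv) (notMem_utility_of_transGen hv)]
      rintro (h | ⟨w, hw, h⟩)
      · exact hvX h
      · exact ih w hw (hv.head hw) h

theorem not_action [Finite V] (hm : G.SolvesMuted X W ε m)
    (hv : Relation.TransGen G.edge v G.decision) : ¬ (m v).action := by
  induction v using G.wellFounded_edge.induction with
  | h v ih =>
    by_cases hvX : v = X
    · rw [hvX, hm.1]
      exact id
    · rw [hm.2 v hvX (ne_of_transGen hv) (notMem_utility_of_transGen hv)]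
      rintro ⟨w, hw, h⟩
      exact ih w hw (hv.head hw) h

theorem worlds_eq [Finite V] (hm : G.SolvesMuted X W ε m) (hvX : v ≠ X)
    (hvD : v ≠ G.decision) (hu : v ∉ G.utility) :
    (m v).worlds = if G.edge v G.decision then upToCompl (G.inbox m v).worlds
      else {σ ∈ (G.inbox m v).worlds | σ v = ε v} := by
  have hsignal : G.edge v G.decision → ¬ (v = X ∨ (G.inbox m v).signal) := fun h hs =>
    hm.not_signal (.single h) (by rw [hm.2 v hvX hvD hu]; exact hs)
  rw [hm.2 v hvX hvD hu]
  exact if_congr (and_iff_left_of_imp fun h h' => hsignal h h'.2) rfl rfl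

theorem mem_inbox_worlds_iff_compl [Finite V] (hm : G.SolvesMuted X W ε m)
    (hm' : G.SolvesMuted X W ε' m') (hε : ∀ v, v ≠ G.decision → ε' v = !ε v) (v : V)
    (σ : V → Bool) : σ ∈ (G.inbox m' v).worlds ↔ σᶜ ∈ (G.inbox m v).worlds := by
  induction v using G.wellFounded_edge.induction generalizing σ with
  | h v ih =>
    refine forall₃_congr fun w hw hwD => ?_
    change σ ∈ (m' w).worlds ↔ σᶜ ∈ (m w).worlds
    by_cases hwX : w = X
    · simp [hwX, hm.1, hm'.1, Message.ofAction]
    have hwu := notMem_utility_of_edge hw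
    rw [hm.worlds_eq hwX hwD hwu, hm'.worlds_eq hwX hwD hwu, hε w hwD]
    split_ifs
    · exact or_congr (ih w hw σ) (ih w hw σᶜ)
    · refine and_congr (ih w hw σ) ?_
      simp [Bool.not_eq_eq_eq_not]

theorem eq_of_edge_decision [Finite V] (hm : G.SolvesMuted X W ε m)
    (hm' : G.SolvesMuted X W ε' m') (hε : ∀ v, v ≠ G.decision → ε' v = !ε v)
    (hw : G.edge w G.decision) : m' w = m w := by
  by_cases hwX : w = X
  · rw [hwX, hm.1, hm'.1]
  have hwD := ne_of_transGen (.single hw)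
  have hwu := notMem_utility_of_edge hw
  have compl_iff := hm.mem_inbox_worlds_iff_compl hm' hε w
  ext σ
  · exact iff_of_false (hm'.not_signal (.single hw)) (hm.not_signal (.single hw))
  · exact iff_of_false (hm'.not_action (.single hw)) (hm.not_action (.single hw))
  · rw [hm.worlds_eq hwX hwD hwu, hm'.worlds_eq hwX hwD hwu, if_pos hw, if_pos hw]
    change _ ∨ _ ↔ _ ∨ _
    rw [compl_iff, compl_iff, compl_compl, or_comm]

end SolvesMuted

end CID

namespace SCIM

section Mechanisms

variable {V : Type} [Fintype V] [DecidableEq V] (M : SCIM V)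

theorem solve_eq (mech : ∀ v, M.Mechanism v) (ε : M.Env) (v : V) :
    M.solve mech ε v = mech v (fun w _ => M.solve mech ε w) (ε v) :=
  WellFounded.fix_eq _ _ _

theorem val_of_ne (π : M.Policy) (ε : M.Env) {v : V} (hv : v ≠ M.decision) :
    M.val π ε v = M.f v hv (fun w _ => M.val π ε w) (ε v) := by
  rw [val, solve_eq]
  simp [polMech, hv]

theorem val_decision (π : M.Policy) (ε : M.Env) :
    M.val π ε M.decision = π (fun w _ => M.val π ε w) (ε M.decision) := by
  rw [val, solve_eq]
  simp [polMech]

theorem valDo_single_self (π : M.Policy) (X : V) (x : M.dom X) (ε : M.Env) :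
    M.valDo π (M.single X x) ε X = x := by
  rw [valDo, solve_eq, doMech]
  simp [single]

theorem valDo_single_of_ne (π : M.Policy) {X : V} (x : M.dom X) (ε : M.Env) {v : V}
    (hvX : v ≠ X) (hv : v ≠ M.decision) :
    M.valDo π (M.single X x) ε v =
      M.f v hv (fun w _ => M.valDo π (M.single X x) ε w) (ε v) := by
  rw [valDo, solve_eq, doMech]
  simp [single, hvX, polMech, hv]

theorem valDo_single_decision (π : M.Policy) {X : V} (x : M.dom X) (ε : M.Env)
    (hX : X ≠ M.decision) :
    M.valDo π (M.single X x) ε M.decision =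
      π (fun w _ => M.valDo π (M.single X x) ε w) (ε M.decision) := by
  rw [valDo, solve_eq, doMech]
  simp [single, hX.symm, polMech]

end Mechanisms

variable {V : Type} [Fintype V] [DecidableEq V] {M : SCIM V}

theorem Optimal.totUtil_eq {π π₀ : M.Policy} (hπ : M.Optimal π)
    (hdom : ∀ ε, M.totUtil (M.val π ε) ≤ M.totUtil (M.val π₀ ε)) {ε : M.Env}
    (hε : 0 < M.prob ε) : M.totUtil (M.val π ε) = M.totUtil (M.val π₀ ε) := by
  have hle (ε : M.Env) :
      M.prob ε * M.totUtil (M.val π ε) ≤ M.prob ε * M.totUtil (M.val π₀ ε) :=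
    mul_le_mul_of_nonneg_left (hdom ε) (Finset.prod_nonneg fun v _ => M.μ_nonneg v (ε v))
  have heq : M.EU π = M.EU π₀ := (Finset.sum_le_sum fun ε _ => hle ε).antisymm (hπ π₀)
  exact mul_left_cancel₀ hε.ne'
    ((Finset.sum_eq_sum_iff_of_le fun ε _ => hle ε).1 heq ε (Finset.mem_univ ε))

end SCIM

namespace CID

/-- The model in which every exogenous variable is a fair coin, structure nodes relay messages,
and the utility node `u` rewards the decision for guessing the coin of `T`. Domains of utility
nodes have to be sets of reals, so `g` embeds the messages into `ℝ`. -/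
noncomputable def messageModel {V : Type} [Finite V] (G : CID V) (X W T u : V) (g : Message V ↪ ℝ) :
    SCIM V where
  toCID := G
  dom _ := Message V
  dom_fintype _ := Fintype.ofFinite _
  dom_nonempty _ := ⟨.ofAction False⟩
  edom _ := Bool
  edom_fintype _ := inferInstance
  edom_nonempty _ := inferInstance
  utilVal _ := g
  utilVal_inj _ _ := g.injective
  f v _ I e :=
    if v ∈ G.utility then .ofAction (v = u ∧ (Inbox.action I ↔ Inbox.Entails I T))
    else relay X W v I e
  μ _ _ := 1 / 2
  μ_nonneg _ _ := by positivity
  μ_sum _ := by simp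

section MessageModel

variable {V : Type} [Fintype V] [DecidableEq V] {G : CID V} {X W T u : V} {g : Message V ↪ ℝ}

/-- The policy that guesses `true` for the coin of `T` iff the parents of the decision know that
it shows `true`. -/
noncomputable def decodePolicy (G : CID V) (X W T u : V) (g : Message V ↪ ℝ) :
    (G.messageModel X W T u g).Policy :=
  fun I _ => Message.ofAction (Inbox.Entails I T)

/-- The messages sent in the message model under the policy `π` when the coins show `ε`. -/
noncomputable def messages (π : (G.messageModel X W T u g).Policy) (ε : V → Bool) : V → Message V :=
  (G.messageModel X W T u g).val π ε

/-- The messages sent in the submodel of the message model in which `X` is muted. -/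
noncomputable def mutedMessages (π : (G.messageModel X W T u g).Policy) (ε : V → Bool) :
    V → Message V :=
  (G.messageModel X W T u g).valDo π ((G.messageModel X W T u g).single X (.ofAction False)) ε

theorem solves_messages (π : (G.messageModel X W T u g).Policy) (ε : V → Bool) :
    G.Solves X W ε (messages π ε) := fun _ hv hu =>
  (SCIM.val_of_ne _ π ε hv).trans (if_neg hu)

theorem solvesMuted_mutedMessages (π : (G.messageModel X W T u g).Policy) (ε : V → Bool) :
    G.SolvesMuted X W ε (mutedMessages π ε) :=
  ⟨SCIM.valDo_single_self _ π X _ ε, fun _ hvX hv hu =>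
    (SCIM.valDo_single_of_ne _ π _ ε hvX hv).trans (if_neg hu)⟩

theorem messages_of_mem_utility (π : (G.messageModel X W T u g).Policy) (ε : V → Bool) {v : V}
    (hv : v ∈ G.utility) :
    messages π ε v = .ofAction (v = u ∧
      ((G.inbox (messages π ε) v).action ↔ (G.inbox (messages π ε) v).Entails T)) :=
  (SCIM.val_of_ne _ π ε (ne_of_mem_utility hv)).trans (if_pos hv)

theorem totUtil_messages (hu : u ∈ G.utility) (hDu : Relation.TransGen G.edge G.decision u)
    (hT : G.Reveals X W u T) (π : (G.messageModel X W T u g).Policy) (ε : V → Bool) :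
    (G.messageModel X W T u g).totUtil (messages π ε) =
      g (.ofAction ((messages π ε G.decision).action ↔ ε T = true)) +
        ∑ _v ∈ G.utility.erase u, g (.ofAction False) := by
  have hm := solves_messages π ε
  refine (Finset.add_sum_erase G.utility (fun v => g (messages π ε v)) hu).symm.trans ?_
  congr 1
  · rw [messages_of_mem_utility π ε hu, hm.inbox_action_iff hDu, hT.entails_iff hm, eq_self,
      true_and]
  · refine Finset.sum_congr rfl fun v hv => ?_
    rw [messages_of_mem_utility π ε (Finset.mem_of_mem_erase hv),
      eq_false (Finset.ne_of_mem_erase hv), false_and]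

theorem action_decodePolicy_iff (hT : G.Reveals X W G.decision T) (ε : V → Bool) :
    (messages (G.decodePolicy X W T u g) ε G.decision).action ↔ ε T = true :=
  (iff_of_eq (congrArg Message.action (SCIM.val_decision _ (G.decodePolicy X W T u g) ε))).trans
    (hT.entails_iff (solves_messages (G.decodePolicy X W T u g) ε))

theorem action_iff_of_optimal (hu : u ∈ G.utility)
    (hDu : Relation.TransGen G.edge G.decision u) (huT : G.Reveals X W u T)
    (hDT : G.Reveals X W G.decision T) (hg : g (.ofAction False) < g (.ofAction True))
    {π : (G.messageModel X W T u g).Policy} (hπ : (G.messageModel X W T u g).Optimal π)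
    (ε : V → Bool) : (messages π ε G.decision).action ↔ ε T = true := by
  have hle (p : Prop) : g (.ofAction p) ≤ g (.ofAction True) := by
    by_cases hp : p
    · rw [eq_true hp]
    · rw [eq_false hp]
      exact hg.le
  have hdecode (ε : V → Bool) :
      (G.messageModel X W T u g).totUtil (messages (G.decodePolicy X W T u g) ε) =
        g (.ofAction True) + ∑ _v ∈ G.utility.erase u, g (.ofAction False) := by
    rw [totUtil_messages hu hDu huT, eq_true (action_decodePolicy_iff hDT ε)]
  have hdom (ε : V → Bool) : (G.messageModel X W T u g).totUtil (messages π ε) ≤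
      (G.messageModel X W T u g).totUtil (messages (G.decodePolicy X W T u g) ε) := by
    rw [hdecode, totUtil_messages hu hDu huT]
    gcongr
    exact hle _
  have hprob : 0 < (G.messageModel X W T u g).prob ε := Finset.prod_pos fun _ _ => one_half_pos
  have heq : (G.messageModel X W T u g).totUtil (messages π ε) =
      (G.messageModel X W T u g).totUtil (messages (G.decodePolicy X W T u g) ε) :=
    hπ.totUtil_eq hdom hprob
  rw [hdecode, totUtil_messages hu hDu huT] at heq
  exact of_eq_true (Message.ofAction_injective (g.injective (add_right_cancel heq)))

theorem mutedMessages_decision (hX : X ≠ G.decision) (π : (G.messageModel X W T u g).Policy)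
    (ε : V → Bool) : mutedMessages π ε G.decision =
      π (G.inbox (mutedMessages π ε) G.decision) (ε G.decision) :=
  SCIM.valDo_single_decision _ π _ ε hX

theorem mutedMessages_decision_eq (hX : X ≠ G.decision)
    (π : (G.messageModel X W T u g).Policy) {ε ε' : V → Bool}
    (hεD : ε' G.decision = ε G.decision) (hε : ∀ v, v ≠ G.decision → ε' v = !ε v) :
    mutedMessages π ε' G.decision = mutedMessages π ε G.decision := by
  have hm := solvesMuted_mutedMessages π ε
  have hm' := solvesMuted_mutedMessages π ε'
  have hinbox : G.inbox (mutedMessages π ε') G.decision = G.inbox (mutedMessages π ε) G.decision :=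
    funext₂ fun _ hw => hm.eq_of_edge_decision hm' hε hw
  rw [mutedMessages_decision hX, mutedMessages_decision hX, hinbox, hεD]

end MessageModel

end CID

/-- **Response incentive graphical criterion: completeness.**
If there are a parent `W` of the decision `D` and a utility node `U` such that `G` has a
directed path `X ⇝ W`, a directed path `D ⇝ U`, and `W` is d-connected to `U` given
`({D} ∪ Pa_D) \ {W}`, then some SCIM compatible with `G` has a response incentive
on `X ≠ D`. -/
theorem response_incentive_criterion_completeness
    {V : Type} [Fintype V] [DecidableEq V] (G : CID V) (X : V) (hX : X ≠ G.decision)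
    (h : RICriterion G X) :
    ∃ M : SCIM V, M.toCID = G ∧ M.ResponseIncentive X := by
  obtain ⟨W, hW, u, hu, hXW, hDu, hsep⟩ := h
  obtain ⟨T, hTD, huT, hDT⟩ := CID.exists_reveals_of_not_dSep hW hXW hu hsep
  obtain ⟨g, hg⟩ := exists_embedding_real_lt
    ((Message.ofAction_injective (V := V)).ne false_ne_true)
  refine ⟨G.messageModel X W T u g, rfl, fun π hπ => ?_⟩
  by_contra! hconst
  have hmute (ε : V → Bool) :
      CID.mutedMessages π ε G.decision = CID.messages π ε G.decision := hconst _ ε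
  have hDu' : Relation.TransGen G.edge G.decision u :=
    (Relation.reflTransGen_iff_eq_or_transGen.1 hDu).resolve_left (CID.ne_of_mem_utility hu)
  have hguess := CID.action_iff_of_optimal hu hDu' huT hDT hg hπ
  let ε : V → Bool := fun _ => true
  let ε' : V → Bool := fun v => decide (v = G.decision)
  have hblind := CID.mutedMessages_decision_eq hX π (ε := ε) (ε' := ε')
    (decide_eq_true rfl) fun v hv => decide_eq_false hv
  rw [hmute, hmute] at hblind
  exact hTD (of_decide_eq_true ((hguess ε').1 (hblind ▸ (hguess ε).2 rfl)))
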